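/- Under the hypotheses of the MMV-FACS error bound, assume additionally ‖X_{T̂_iᶜ,:}‖_F ≠ 0 and ‖X_{Γᶜ,:}‖_F ≠ 0, and set η_i = ‖X_{Γᶜ,:}‖_F/‖X_{T̂_iᶜ,:}‖_F, ζ = ‖W‖_F/‖X_{Γᶜ,:}‖_F, ξ = (3√(1+δ)+1)·‖X−X^K‖_F/(3‖X_{Γᶜ,:}‖_F) + (√(1+δ)/√(R+K))·‖X−X^K‖_{2,1}/‖X_{Γᶜ,:}‖_F. Then ‖X − X̂‖_F ≤ ((1+δ+3ζ+3ξ)/(1−δ)²)·η_i·‖X − X̂_i‖_F; consequently, if η_i < (1−δ)²/(1+δ+3ζ+3ξ), MMV-FACS achieves SRER gain of at least ((1−δ)²/((1+δ+3ζ+3ξ)η_i))² over the i-th participating algorithm. -/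

import Mathlib

open scoped BigOperators
open Matrix

noncomputable def frob {m n : Type*} [Fintype m] [Fintype n] (X : Matrix m n ℝ) : ℝ :=
  Real.sqrt (∑ i, ∑ j, (X i j) ^ 2)

noncomputable def rowNorm {m n : Type*} [Fintype n] (X : Matrix m n ℝ) (i : m) : ℝ :=
  Real.sqrt (∑ j, (X i j) ^ 2)

noncomputable def norm21 {m n : Type*} [Fintype m] [Fintype n] (X : Matrix m n ℝ) : ℝ :=
  ∑ i, rowNorm X i

noncomputable def restrictRows {m n : Type*} (X : Matrix m n ℝ) (S : Set m) : Matrix m n ℝ :=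
  fun i j => S.indicator (fun i' => X i' j) i

noncomputable def vnorm {m : Type*} [Fintype m] (v : m → ℝ) : ℝ :=
  Real.sqrt (∑ i, (v i) ^ 2)

/-- `X` has at most `s` nonzero rows. -/
def rowSparse {m n : Type*} (X : Matrix m n ℝ) (s : ℕ) : Prop :=
  {i | X i ≠ 0}.ncard ≤ s

/-- Column submatrix of `A` with columns indexed by `S`. -/
def colSub {M N : ℕ} (A : Matrix (Fin M) (Fin N) ℝ) (S : Finset (Fin N)) :
    Matrix (Fin M) {j // j ∈ S} ℝ :=
  A.submatrix id (fun j => (j : Fin N))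

/-- `D` is the Moore–Penrose pseudo-inverse of `A` (the four Penrose conditions). -/
def IsPinv {m n : Type*} [Fintype m] [Fintype n] (A : Matrix m n ℝ) (D : Matrix n m ℝ) : Prop :=
  A * D * A = A ∧ D * A * D = D ∧ (A * D)ᵀ = A * D ∧ (D * A)ᵀ = D * A

/-- Restricted isometry property of order `s` with constant `δ`. -/
def RIP {M N : ℕ} (A : Matrix (Fin M) (Fin N) ℝ) (s : ℕ) (δ : ℝ) : Prop :=
  ∀ x : Fin N → ℝ, {i | x i ≠ 0}.ncard ≤ s →
    (1 - δ) * (∑ i, (x i) ^ 2) ≤ (∑ i, (A.mulVec x i) ^ 2) ∧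
      (∑ i, (A.mulVec x i) ^ 2) ≤ (1 + δ) * (∑ i, (x i) ^ 2)

/-!
The residual of a least-squares estimate is orthogonal to the columns it uses. Since the restricted
isometry property makes the images of disjointly supported signals almost orthogonal, an estimate
with row support `U` recovers the rows in `U` of a sparse signal up to a small multiple of the
missed rows `X_{Uᶜ}` and the noise. Two such estimates are chained. The first one, `V`, has
support `Γ`; replacing `Γ` by the set `T̂` of the largest rows of `V` costs at most twice the error
of `V` beyond `X_{Γᶜ}`. The second one, `X̂`, has support `T̂`. A signal that is not sparse is
handled by adding `A (X - X^K)` to the noise and bounding it block by block, the Frobenius norm of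
each block of `s` rows being at most `1 / √s` times the sum of the row norms of the preceding one.
-/

section Frobenius

open scoped Matrix.Norms.Frobenius

variable {m n : Type*} [Fintype n]

lemma rowNorm_nonneg (X : Matrix m n ℝ) (i : m) : 0 ≤ rowNorm X i :=
  Real.sqrt_nonneg _

variable [Fintype m] (X Y : Matrix m n ℝ)

lemma norm21_nonneg : 0 ≤ norm21 X :=
  Finset.sum_nonneg fun i _ => rowNorm_nonneg X i

lemma frob_nonneg : 0 ≤ frob X :=
  Real.sqrt_nonneg _

lemma frob_sq_eq_sum_rowNorm_sq : frob X ^ 2 = ∑ i, rowNorm X i ^ 2 := by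
  simp only [frob, rowNorm]
  rw [Real.sq_sqrt (by positivity)]
  exact Finset.sum_congr rfl fun i _ => (Real.sq_sqrt (by positivity)).symm

lemma frob_eq_norm : frob X = ‖X‖ := by
  simp [frob, Matrix.frobenius_norm_def, Real.sqrt_eq_rpow]

lemma frob_add_le : frob (X + Y) ≤ frob X + frob Y := by
  simpa only [frob_eq_norm] using norm_add_le X Y

lemma frob_sub_le : frob (X - Y) ≤ frob X + frob Y := by
  simpa only [frob_eq_norm] using norm_sub_le X Y

variable {X} in
lemma frob_eq_zero : frob X = 0 ↔ X = 0 := by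
  rw [frob_eq_norm, norm_eq_zero]

lemma trace_transpose_mul_eq_sum : (Xᵀ * Y).trace = ∑ i, ∑ j, X i j * Y i j :=
  Finset.sum_comm

lemma trace_transpose_mul_self : (Xᵀ * X).trace = frob X ^ 2 := by
  rw [trace_transpose_mul_eq_sum, frob, Real.sq_sqrt (by positivity)]
  simp only [sq]

lemma trace_transpose_mul_le : (Xᵀ * Y).trace ≤ frob X * frob Y := by
  simp only [trace_transpose_mul_eq_sum, frob, ← Fintype.sum_prod_type']
  exact Real.sum_mul_le_sqrt_mul_sqrt _ (fun p : m × n => X p.1 p.2) fun p => Y p.1 p.2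

lemma frob_smul_add_smul_sq (a b : ℝ) :
    frob (a • X + b • Y) ^ 2 =
      a ^ 2 * frob X ^ 2 + 2 * a * b * (Xᵀ * Y).trace + b ^ 2 * frob Y ^ 2 := by
  have hcomm : (Yᵀ * X).trace = (Xᵀ * Y).trace := by
    rw [← Matrix.trace_transpose, Matrix.transpose_mul, Matrix.transpose_transpose]
  simp only [← trace_transpose_mul_self, Matrix.transpose_add, Matrix.transpose_smul,
    Matrix.add_mul, Matrix.mul_add, Matrix.smul_mul, Matrix.mul_smul, Matrix.trace_add,
    Matrix.trace_smul, smul_eq_mul, hcomm]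
  ring

end Frobenius

section RestrictRows

variable {m n : Type*} (X Y : Matrix m n ℝ) (S T : Set m)

variable {X S} in
lemma restrictRows_of_notMem {i : m} (hi : i ∉ S) : restrictRows X S i = 0 := by
  ext j
  exact Set.indicator_of_notMem hi _

lemma restrictRows_univ : restrictRows X Set.univ = X := by
  ext i j
  simp only [restrictRows, Set.indicator_univ]

variable {X S} in
lemma restrictRows_eq_zero (h : ∀ i ∈ S, X i = 0) : restrictRows X S = 0 := by
  ext i j
  exact Set.indicator_apply_eq_zero.2 fun hi => congrFun (h i hi) j

lemma restrictRows_sub : restrictRows (X - Y) S = restrictRows X S - restrictRows Y S := by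
  ext i j
  exact congrFun (Set.indicator_sub S (X · j) (Y · j)) i

lemma restrictRows_restrictRows :
    restrictRows (restrictRows X S) T = restrictRows X (T ∩ S) := by
  ext i j
  exact congrFun (Set.indicator_indicator T S (X · j)) i

variable {S T} in
lemma restrictRows_add_restrictRows_sdiff (h : S ⊆ T) :
    restrictRows X S + restrictRows X (T \ S) = restrictRows X T := by
  ext i j
  have hunion := Set.indicator_union_of_disjoint
    (Set.disjoint_sdiff_right (s := S) (t := T)) (X · j)
  rw [Set.union_sdiff_cancel h] at hunion
  exact (congrFun hunion i).symm

lemma restrictRows_add_restrictRows_compl : restrictRows X S + restrictRows X Sᶜ = X := by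
  rw [Set.compl_eq_univ_sdiff, restrictRows_add_restrictRows_sdiff X S.subset_univ,
    restrictRows_univ]

variable [Fintype m] [Fintype n]

lemma frob_restrictRows_le : frob (restrictRows X S) ≤ frob X := by
  refine Real.sqrt_le_sqrt (Finset.sum_le_sum fun i _ => Finset.sum_le_sum fun j _ => ?_)
  by_cases hi : i ∈ S
  · simp [restrictRows, hi]
  · simpa [restrictRows, hi] using sq_nonneg (X i j)

variable {Y S} in
lemma frob_restrictRows_le_frob_sub (hY : ∀ i ∈ S, Y i = 0) :
    frob (restrictRows X S) ≤ frob (X - Y) := by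
  have h := frob_restrictRows_le (X - Y) S
  rwa [restrictRows_sub, restrictRows_eq_zero hY, sub_zero] at h

lemma frob_restrictRows_coe_sq (U : Finset m) :
    frob (restrictRows X U) ^ 2 = ∑ i ∈ U, rowNorm X i ^ 2 := by
  classical
  rw [frob_sq_eq_sum_rowNorm_sq, ← Finset.sum_indicator_subset _ U.subset_univ]
  refine Finset.sum_congr rfl fun i _ => ?_
  by_cases hi : i ∈ U <;> simp [rowNorm, restrictRows, hi]

end RestrictRows

section LargestRows

variable {m n : Type*} [Fintype m] [Fintype n] {X : Matrix m n ℝ}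

lemma frob_restrictRows_le_sum_div_sqrt {T U : Finset m} (hcard : U.card ≤ T.card)
    (hle : ∀ i ∈ T, ∀ j ∈ U, rowNorm X j ≤ rowNorm X i) :
    frob (restrictRows X U) ≤ (∑ i ∈ T, rowNorm X i) / √T.card := by
  rcases T.eq_empty_or_nonempty with rfl | hT
  · obtain rfl : U = ∅ := Finset.card_eq_zero.1 (Nat.le_zero.1 hcard)
    simp [restrictRows_eq_zero, frob]
  obtain ⟨k, hkT, hkmin⟩ := T.exists_min_image (rowNorm X) hT
  have hsq : frob (restrictRows X U) ^ 2 ≤ (√T.card * rowNorm X k) ^ 2 := calc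
    frob (restrictRows X U) ^ 2 = ∑ j ∈ U, rowNorm X j ^ 2 := frob_restrictRows_coe_sq X U
    _ ≤ U.card • rowNorm X k ^ 2 := Finset.sum_le_card_nsmul _ _ _ fun j hj =>
      pow_le_pow_left₀ (rowNorm_nonneg X j) (hle k hkT j hj) 2
    _ ≤ T.card • rowNorm X k ^ 2 := nsmul_le_nsmul_left (sq_nonneg _) hcard
    _ = (√T.card * rowNorm X k) ^ 2 := by
      rw [mul_pow, Real.sq_sqrt (Nat.cast_nonneg _), nsmul_eq_mul]
  rw [le_div_iff₀ (Real.sqrt_pos.2 (Nat.cast_pos.2 hT.card_pos))]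
  calc frob (restrictRows X U) * √T.card ≤ √T.card * rowNorm X k * √T.card := by
        gcongr
        exact le_of_sq_le_sq hsq (mul_nonneg (Real.sqrt_nonneg _) (rowNorm_nonneg X k))
    _ = T.card • rowNorm X k := by
      rw [mul_right_comm, Real.mul_self_sqrt (Nat.cast_nonneg _), nsmul_eq_mul]
    _ ≤ ∑ i ∈ T, rowNorm X i := Finset.card_nsmul_le_sum _ _ _ hkmin

lemma frob_restrictRows_le_frob_restrictRows {T U : Finset m} (hcard : U.card ≤ T.card)
    (hle : ∀ i ∈ T, ∀ j ∈ U, rowNorm X j ≤ rowNorm X i) :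
    frob (restrictRows X U) ≤ frob (restrictRows X T) := by
  refine (frob_restrictRows_le_sum_div_sqrt hcard hle).trans
    (div_le_of_le_mul₀ (Real.sqrt_nonneg _) (frob_nonneg _) ?_)
  refine le_of_sq_le_sq ?_ (mul_nonneg (frob_nonneg _) (Real.sqrt_nonneg _))
  rw [mul_pow, frob_restrictRows_coe_sq, Real.sq_sqrt (Nat.cast_nonneg _), mul_comm]
  exact sq_sum_le_card_mul_sum_sq

lemma frob_restrictRows_compl_le_two_mul {Y V : Matrix m n ℝ} {S T : Finset m}
    (hY : ∀ i ∉ S, Y i = 0) (hcard : S.card ≤ T.card)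
    (hsel : ∀ i ∈ T, ∀ j ∉ T, rowNorm V j ≤ rowNorm V i) :
    frob (restrictRows Y (T : Set m)ᶜ) ≤ 2 * frob (V - Y) := by
  classical
  have hY_compl : restrictRows Y (T : Set m)ᶜ = restrictRows Y (S \ T : Finset m) := by
    ext i j
    by_cases hS : i ∈ S <;> by_cases hT : i ∈ T <;> simp [restrictRows, hS, hT, hY]
  have hV_diff : restrictRows V (T \ S : Finset m) = restrictRows (V - Y) (T \ S : Finset m) := by
    rw [restrictRows_sub, restrictRows_eq_zero fun i hi => hY i (Finset.mem_sdiff.1 hi).2, sub_zero]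
  have hV_le : frob (restrictRows V (S \ T : Finset m)) ≤ frob (V - Y) := calc
    _ ≤ frob (restrictRows V (T \ S : Finset m)) :=
      frob_restrictRows_le_frob_restrictRows (Finset.card_sdiff_le_card_sdiff_iff.2 hcard)
        fun i hi j hj => hsel i (Finset.mem_sdiff.1 hi).1 j (Finset.mem_sdiff.1 hj).2
    _ ≤ frob (V - Y) := hV_diff ▸ frob_restrictRows_le _ _
  calc frob (restrictRows Y (T : Set m)ᶜ)
      = frob (restrictRows V (S \ T : Finset m) - restrictRows (V - Y) (S \ T : Finset m)) := by
        rw [hY_compl, restrictRows_sub, sub_sub_cancel]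
    _ ≤ frob (V - Y) + frob (V - Y) :=
      (frob_sub_le _ _).trans (add_le_add hV_le (frob_restrictRows_le _ _))
    _ = 2 * frob (V - Y) := (two_mul _).symm

lemma exists_subset_card_eq_forall_le {ι α : Type*} [DecidableEq ι] [LinearOrder α] (f : ι → α)
    {U : Finset ι} {s : ℕ} (hs : s ≤ U.card) :
    ∃ T ⊆ U, T.card = s ∧ ∀ i ∈ T, ∀ j ∈ U \ T, f j ≤ f i := by
  induction s with
  | zero => exact ⟨∅, by simp⟩
  | succ s ih =>
    obtain ⟨T, hTU, rfl, hmax⟩ := ih (by omega)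
    have hne : (U \ T).Nonempty := Finset.sdiff_nonempty_of_card_lt_card hs
    obtain ⟨k, hk, hkmax⟩ := (U \ T).exists_max_image f hne
    obtain ⟨hkU, hkT⟩ := Finset.mem_sdiff.1 hk
    refine ⟨insert k T, Finset.insert_subset hkU hTU, Finset.card_insert_of_notMem hkT,
      fun i hi j hj => ?_⟩
    have hjT : j ∈ U \ T := Finset.sdiff_subset_sdiff subset_rfl (Finset.subset_insert k T) hj
    rcases Finset.mem_insert.1 hi with rfl | hi
    · exact hkmax j hjT
    · exact hmax i hi j hjT

end LargestRows

section RIP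

variable {M N s : ℕ} {n : Type*} [Fintype n] {A : Matrix (Fin M) (Fin N) ℝ} {δ : ℝ}
  {X Y : Matrix (Fin N) n ℝ} {S T U : Finset (Fin N)}

lemma RIP.frob_mul_sq_bounds (h : RIP A s δ) (hU : U.card ≤ s) (hX : ∀ i ∉ U, X i = 0) :
    (1 - δ) * frob X ^ 2 ≤ frob (A * X) ^ 2 ∧ frob (A * X) ^ 2 ≤ (1 + δ) * frob X ^ 2 := by
  have hcol (j : n) : {i | X i j ≠ 0}.ncard ≤ s := by
    refine (Set.ncard_le_ncard (fun i hi => ?_) U.finite_toSet).trans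
      ((Set.ncard_coe_finset U).trans_le hU)
    by_contra hiU
    exact hi (congrFun (hX i hiU) j)
  have hfrob {m : Type} [Fintype m] (Y : Matrix m n ℝ) : frob Y ^ 2 = ∑ j, ∑ i, Y i j ^ 2 := by
    rw [frob, Real.sq_sqrt (by positivity), Finset.sum_comm]
  rw [hfrob, hfrob, Finset.mul_sum, Finset.mul_sum]
  exact ⟨Finset.sum_le_sum fun j _ => (h _ (hcol j)).1,
    Finset.sum_le_sum fun j _ => (h _ (hcol j)).2⟩

lemma RIP.frob_mul_le (h : RIP A s δ) (hδ0 : 0 ≤ δ) (hU : U.card ≤ s)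
    (hX : ∀ i ∉ U, X i = 0) : frob (A * X) ≤ √(1 + δ) * frob X := by
  refine le_of_sq_le_sq ?_ (mul_nonneg (Real.sqrt_nonneg _) (frob_nonneg X))
  rw [mul_pow, Real.sq_sqrt (by positivity)]
  exact (h.frob_mul_sq_bounds hU hX).2

lemma RIP.sqrt_mul_frob_le (h : RIP A s δ) (hδ1 : δ ≤ 1) (hU : U.card ≤ s)
    (hX : ∀ i ∉ U, X i = 0) : √(1 - δ) * frob X ≤ frob (A * X) := by
  refine le_of_sq_le_sq ?_ (frob_nonneg _)
  rw [mul_pow, Real.sq_sqrt (sub_nonneg.2 hδ1)]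
  exact (h.frob_mul_sq_bounds hU hX).1

lemma RIP.trace_transpose_mul_mul_le (h : RIP A s δ) (hS : ∀ i ∉ S, X i = 0)
    (hT : ∀ i ∉ T, Y i = 0) (hdisj : Disjoint S T) (hcard : (S ∪ T).card ≤ s) :
    ((A * X)ᵀ * (A * Y)).trace ≤ δ * frob X * frob Y := by
  rcases (frob_nonneg X).eq_or_lt with hX | hX
  · simp [frob_eq_zero.1 hX.symm, frob]
  rcases (frob_nonneg Y).eq_or_lt with hY | hY
  · simp [frob_eq_zero.1 hY.symm, frob]
  have horth : (Xᵀ * Y).trace = 0 := by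
    rw [trace_transpose_mul_eq_sum]
    refine Finset.sum_eq_zero fun i _ => Finset.sum_eq_zero fun j _ => ?_
    by_cases hi : i ∈ S
    · simp [hT i (Finset.disjoint_left.1 hdisj hi)]
    · simp [hS i hi]
  have hbounds (a b : ℝ) := h.frob_mul_sq_bounds (X := a • X + b • Y) hcard fun i hi => by
    obtain ⟨hiS, hiT⟩ := not_or.1 (mt Finset.mem_union.2 hi)
    ext j
    simp [hS i hiS, hT i hiT]
  simp only [Matrix.mul_add, Matrix.mul_smul, frob_smul_add_smul_sq, horth] at hbounds
  -- Polarization, with `X` and `Y` rescaled to equal norms.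
  have hplus := (hbounds (frob Y) (frob X)).2
  have hminus := (hbounds (frob Y) (-frob X)).1
  refine le_of_mul_le_mul_left ?_ (mul_pos hX hY)
  linarith

lemma RIP.frob_mul_restrictRows_le (h : RIP A s δ) (hδ0 : 0 ≤ δ) (hs : 0 < s)
    (X : Matrix (Fin N) n ℝ) (U : Finset (Fin N)) {c : ℝ}
    (hc : ∀ T ⊆ U, T.card ≤ s → frob (restrictRows X T) ≤ c) :
    frob (A * restrictRows X U) ≤ √(1 + δ) * (c + (∑ i ∈ U, rowNorm X i) / √s) := by
  induction U using Finset.strongInduction generalizing c with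
  | H U ih =>
    have hblock {T : Finset (Fin N)} (hTU : T ⊆ U) (hT : T.card ≤ s) :
        frob (A * restrictRows X T) ≤ √(1 + δ) * c :=
      (h.frob_mul_le hδ0 hT fun _ hi => restrictRows_of_notMem hi).trans
        (mul_le_mul_of_nonneg_left (hc T hTU hT) (Real.sqrt_nonneg _))
    rcases le_or_gt U.card s with hU | hU
    · refine (hblock subset_rfl hU).trans (mul_le_mul_of_nonneg_left ?_ (Real.sqrt_nonneg _))
      exact le_add_of_nonneg_right
        (div_nonneg (Finset.sum_nonneg fun i _ => rowNorm_nonneg X i) (Real.sqrt_nonneg _))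
    obtain ⟨T, hTU, rfl, hmax⟩ := exists_subset_card_eq_forall_le (rowNorm X) hU.le
    have hrest := ih (U \ T) (Finset.sdiff_ssubset hTU (Finset.card_pos.1 hs))
      fun T' hT' hcard => frob_restrictRows_le_sum_div_sqrt hcard
        fun i hi j hj => hmax i hi j (hT' hj)
    rw [← restrictRows_add_restrictRows_sdiff X (Finset.coe_subset.2 hTU), ← Finset.coe_sdiff,
      Matrix.mul_add]
    calc frob (A * restrictRows X T + A * restrictRows X (U \ T : Finset (Fin N)))
        ≤ √(1 + δ) * c + √(1 + δ) * ((∑ i ∈ T, rowNorm X i) / √T.card +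
            (∑ i ∈ U \ T, rowNorm X i) / √T.card) :=
          (frob_add_le _ _).trans (add_le_add (hblock hTU le_rfl) hrest)
      _ = √(1 + δ) * (c + (∑ i ∈ U, rowNorm X i) / √T.card) := by
        rw [← Finset.sum_sdiff hTU]
        ring

lemma RIP.frob_mul_le_add_norm21 (h : RIP A s δ) (hδ0 : 0 ≤ δ) (hs : 0 < s)
    (X : Matrix (Fin N) n ℝ) : frob (A * X) ≤ √(1 + δ) * (frob X + norm21 X / √s) := by
  have hbound := h.frob_mul_restrictRows_le hδ0 hs X Finset.univ fun T _ _ =>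
    frob_restrictRows_le X T
  rwa [Finset.coe_univ, restrictRows_univ] at hbound

end RIP

section LeastSquares

variable {m k n : Type*} [Fintype m] [Fintype k] [Fintype n]

/-- `Z` is a least-squares solution of `A * Z = B` among the matrices whose rows outside `U` vanish.
It is encoded by the normal equations: the residual is orthogonal, for the Frobenius inner product
`(X, Y) ↦ (Xᵀ * Y).trace`, to the image under `A` of these matrices. -/
structure IsLeastSquaresOn (A : Matrix m k ℝ) (U : Finset k) (B : Matrix m n ℝ)
    (Z : Matrix k n ℝ) : Prop where
  eq_zero_of_notMem : ∀ i ∉ U, Z i = 0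
  trace_mul_residual : ∀ Y : Matrix k n ℝ, (∀ i ∉ U, Y i = 0) →
    ((A * Y)ᵀ * (B - A * Z)).trace = 0

lemma IsPinv.transpose_mul_mul {C : Matrix m k ℝ} {D : Matrix k m ℝ} (h : IsPinv C D) :
    Cᵀ * (C * D) = Cᵀ := by
  obtain ⟨hCDC, -, hsymm, -⟩ := h
  rw [← hsymm, ← Matrix.transpose_mul, hCDC]

lemma mul_eq_colSub_mul_submatrix {M N : ℕ} {n : Type*} {A : Matrix (Fin M) (Fin N) ℝ}
    {U : Finset (Fin N)} {X : Matrix (Fin N) n ℝ} (hX : ∀ i ∉ U, X i = 0) :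
    A * X = colSub A U * X.submatrix (Subtype.val : {j // j ∈ U} → Fin N) id := by
  ext i j
  simp only [Matrix.mul_apply, colSub, Matrix.submatrix_apply, id]
  rw [← Finset.sum_subset U.subset_univ fun k _ hk => by simp [hX k hk]]
  exact (Finset.sum_coe_sort U fun k => A i k * X k j).symm

lemma IsPinv.isLeastSquaresOn {M N : ℕ} {A : Matrix (Fin M) (Fin N) ℝ} {U : Finset (Fin N)}
    {D : Matrix {j // j ∈ U} (Fin M) ℝ} (h : IsPinv (colSub A U) D) (B : Matrix (Fin M) n ℝ) :
    IsLeastSquaresOn A U B fun i j => if hi : i ∈ U then (D * B) ⟨i, hi⟩ j else 0 := by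
  set Z : Matrix (Fin N) n ℝ := fun i j => if hi : i ∈ U then (D * B) ⟨i, hi⟩ j else 0
  have hZU : ∀ i ∉ U, Z i = 0 := fun i hi => funext fun j => dif_neg hi
  have hZ : Z.submatrix (Subtype.val : {j // j ∈ U} → Fin N) id = D * B := by
    ext i j
    exact dif_pos i.2
  refine ⟨hZU, fun Y hY => ?_⟩
  rw [mul_eq_colSub_mul_submatrix hY, mul_eq_colSub_mul_submatrix hZU, hZ, Matrix.transpose_mul,
    Matrix.mul_assoc, Matrix.mul_sub, ← Matrix.mul_assoc (colSub A U) D B, ← Matrix.mul_assoc _ _ B,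
    h.transpose_mul_mul, sub_self, Matrix.mul_zero, Matrix.trace_zero]

lemma IsLeastSquaresOn.sub_restrictRows_of_notMem {A : Matrix m k ℝ} {U : Finset k}
    {B : Matrix m n ℝ} {Z : Matrix k n ℝ} (h : IsLeastSquaresOn A U B Z) (X : Matrix k n ℝ)
    {i : k} (hi : i ∉ U) : (Z - restrictRows X U) i = 0 := by
  change Z i - restrictRows X U i = 0
  rw [h.eq_zero_of_notMem i hi, restrictRows_of_notMem hi, sub_zero]

lemma IsLeastSquaresOn.frob_mul_sub_restrictRows_sq {A : Matrix m k ℝ} {U : Finset k}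
    {X Z : Matrix k n ℝ} {W : Matrix m n ℝ} (h : IsLeastSquaresOn A U (A * X + W) Z) :
    frob (A * (Z - restrictRows X U)) ^ 2 =
      ((A * (Z - restrictRows X U))ᵀ * (A * restrictRows X (U : Set k)ᶜ)).trace +
        ((A * (Z - restrictRows X U))ᵀ * W).trace := by
  have hresidual : A * X + W - A * Z =
      A * restrictRows X (U : Set k)ᶜ + W - A * (Z - restrictRows X U) := by
    nth_rw 1 [← restrictRows_add_restrictRows_compl X U]
    rw [Matrix.mul_add, Matrix.mul_sub]
    abel
  have hnormal := h.trace_mul_residual _ fun _ => h.sub_restrictRows_of_notMem X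
  rw [hresidual, Matrix.mul_sub, Matrix.mul_add, Matrix.trace_sub, Matrix.trace_add,
    trace_transpose_mul_self] at hnormal
  exact (sub_eq_zero.1 hnormal).symm

end LeastSquares

section Fusion

variable {M N s : ℕ} {n : Type*} [Fintype n] {A : Matrix (Fin M) (Fin N) ℝ} {δ : ℝ}
  {X Z V : Matrix (Fin N) n ℝ} {W : Matrix (Fin M) n ℝ} {S T U Γ : Finset (Fin N)}

lemma RIP.sqrt_mul_frob_mul_sub_restrictRows_le (h : RIP A s δ) (hδ0 : 0 ≤ δ) (hδ1 : δ ≤ 1)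
    (hX : ∀ i ∉ S, X i = 0) (hcard : (U ∪ S).card ≤ s)
    (hZ : IsLeastSquaresOn A U (A * X + W) Z) :
    √(1 - δ) * frob (A * (Z - restrictRows X U)) ≤
      δ * frob (restrictRows X (U : Set (Fin N))ᶜ) + √(1 - δ) * frob W := by
  set E := Z - restrictRows X U
  set Q := restrictRows X (U : Set (Fin N))ᶜ with hQ
  have hE : ∀ i ∉ U, E i = 0 := fun _ => hZ.sub_restrictRows_of_notMem X
  have hQ_supp : ∀ i ∉ S \ U, Q i = 0 := fun i hi => by
    ext j
    by_cases hiU : i ∈ U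
    · simp [hQ, restrictRows, hiU]
    · simp [hQ, restrictRows, hX i fun hiS => hi (Finset.mem_sdiff.2 ⟨hiS, hiU⟩)]
  have horth : ((A * E)ᵀ * (A * Q)).trace ≤ δ * frob E * frob Q :=
    h.trace_transpose_mul_mul_le hE hQ_supp Finset.disjoint_sdiff
      (by rwa [Finset.union_sdiff_self_eq_union])
  have hsq : frob (A * E) ^ 2 ≤ δ * frob E * frob Q + frob (A * E) * frob W :=
    hZ.frob_mul_sub_restrictRows_sq.trans_le (add_le_add horth (trace_transpose_mul_le _ _))
  have hlow : √(1 - δ) * frob E ≤ frob (A * E) :=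
    h.sqrt_mul_frob_le hδ1 ((Finset.card_le_card Finset.subset_union_left).trans hcard) hE
  have hQ0 := frob_nonneg Q
  have hW0 := frob_nonneg W
  rcases (frob_nonneg (A * E)).eq_or_lt with hAE | hAE
  · rw [← hAE, mul_zero]
    positivity
  refine le_of_mul_le_mul_left ?_ hAE
  calc frob (A * E) * (√(1 - δ) * frob (A * E)) = √(1 - δ) * frob (A * E) ^ 2 := by ring
    _ ≤ √(1 - δ) * (δ * frob E * frob Q + frob (A * E) * frob W) := by gcongr
    _ = δ * frob Q * (√(1 - δ) * frob E) + √(1 - δ) * frob (A * E) * frob W := by ring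
    _ ≤ δ * frob Q * frob (A * E) + √(1 - δ) * frob (A * E) * frob W := by gcongr
    _ = frob (A * E) * (δ * frob Q + √(1 - δ) * frob W) := by ring

lemma RIP.one_sub_mul_frob_sub_restrictRows_le (h : RIP A s δ) (hδ0 : 0 ≤ δ) (hδ1 : δ ≤ 1)
    (hX : ∀ i ∉ S, X i = 0) (hcard : (U ∪ S).card ≤ s)
    (hZ : IsLeastSquaresOn A U (A * X + W) Z) :
    (1 - δ) * frob (Z - restrictRows X U) ≤
      δ * frob (restrictRows X (U : Set (Fin N))ᶜ) + frob W := by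
  have hlow : √(1 - δ) * frob (Z - restrictRows X U) ≤ frob (A * (Z - restrictRows X U)) :=
    h.sqrt_mul_frob_le hδ1 ((Finset.card_le_card Finset.subset_union_left).trans hcard)
      fun _ => hZ.sub_restrictRows_of_notMem X
  calc (1 - δ) * frob (Z - restrictRows X U)
      = √(1 - δ) * (√(1 - δ) * frob (Z - restrictRows X U)) := by
        rw [← mul_assoc, Real.mul_self_sqrt (sub_nonneg.2 hδ1)]
    _ ≤ √(1 - δ) * frob (A * (Z - restrictRows X U)) := by gcongr
    _ ≤ δ * frob (restrictRows X (U : Set (Fin N))ᶜ) + √(1 - δ) * frob W :=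
      h.sqrt_mul_frob_mul_sub_restrictRows_le hδ0 hδ1 hX hcard hZ
    _ ≤ δ * frob (restrictRows X (U : Set (Fin N))ᶜ) + frob W := by
      gcongr
      exact mul_le_of_le_one_left (frob_nonneg W) (Real.sqrt_le_one.2 (by linarith))

lemma RIP.one_sub_mul_frob_sub_le (h : RIP A s δ) (hδ0 : 0 ≤ δ) (hδ1 : δ ≤ 1)
    (hX : ∀ i ∉ S, X i = 0) (hcard : (U ∪ S).card ≤ s)
    (hZ : IsLeastSquaresOn A U (A * X + W) Z) :
    (1 - δ) * frob (X - Z) ≤ frob (restrictRows X (U : Set (Fin N))ᶜ) + frob W := by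
  have hsub : X - Z = restrictRows X (U : Set (Fin N))ᶜ - (Z - restrictRows X U) := by
    nth_rw 1 [← restrictRows_add_restrictRows_compl X U]
    abel
  calc (1 - δ) * frob (X - Z)
      ≤ (1 - δ) * (frob (restrictRows X (U : Set (Fin N))ᶜ) + frob (Z - restrictRows X U)) := by
        rw [hsub]
        exact mul_le_mul_of_nonneg_left (frob_sub_le _ _) (sub_nonneg.2 hδ1)
    _ ≤ frob (restrictRows X (U : Set (Fin N))ᶜ) + frob W := by
      linarith [h.one_sub_mul_frob_sub_restrictRows_le hδ0 hδ1 hX hcard hZ]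

lemma RIP.one_sub_mul_frob_restrictRows_compl_le (h : RIP A s δ) (hδ0 : 0 ≤ δ) (hδ1 : δ ≤ 1)
    (hX : ∀ i ∉ S, X i = 0) (hΓS : (Γ ∪ S).card ≤ s) (hV : IsLeastSquaresOn A Γ (A * X + W) V)
    (hTΓ : T ⊆ Γ) (hcard : S.card ≤ T.card)
    (hsel : ∀ i ∈ T, ∀ j ∉ T, rowNorm V j ≤ rowNorm V i) :
    (1 - δ) * frob (restrictRows X (T : Set (Fin N))ᶜ) ≤
      (1 + δ) * frob (restrictRows X (Γ : Set (Fin N))ᶜ) + 2 * frob W := by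
  have hsplit : restrictRows X (T : Set (Fin N))ᶜ =
      restrictRows X (Γ : Set (Fin N))ᶜ + restrictRows (restrictRows X Γ) (T : Set (Fin N))ᶜ := by
    rw [restrictRows_restrictRows, ← Set.sdiff_compl,
      restrictRows_add_restrictRows_sdiff X (Set.compl_subset_compl.2 (Finset.coe_subset.2 hTΓ))]
  have hXΓ : ∀ i ∉ S, restrictRows X Γ i = 0 := fun i hi => by
    ext j
    simp [restrictRows, hX i hi]
  have hmissed : frob (restrictRows X (T : Set (Fin N))ᶜ) ≤
      frob (restrictRows X (Γ : Set (Fin N))ᶜ) + 2 * frob (V - restrictRows X Γ) :=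
    hsplit ▸ (frob_add_le _ _).trans
      (add_le_add_right (frob_restrictRows_compl_le_two_mul hXΓ hcard hsel) _)
  calc (1 - δ) * frob (restrictRows X (T : Set (Fin N))ᶜ)
      ≤ (1 - δ) * (frob (restrictRows X (Γ : Set (Fin N))ᶜ) +
          2 * frob (V - restrictRows X Γ)) :=
        mul_le_mul_of_nonneg_left hmissed (sub_nonneg.2 hδ1)
    _ ≤ (1 + δ) * frob (restrictRows X (Γ : Set (Fin N))ᶜ) + 2 * frob W := by
      linarith [h.one_sub_mul_frob_sub_restrictRows_le hδ0 hδ1 hX hΓS hV]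

lemma RIP.one_sub_sq_mul_frob_sub_le_of_rowSupport (h : RIP A s δ) (hδ0 : 0 ≤ δ) (hδ1 : δ ≤ 1)
    (hX : ∀ i ∉ S, X i = 0) (hΓS : (Γ ∪ S).card ≤ s) (hV : IsLeastSquaresOn A Γ (A * X + W) V)
    (hTΓ : T ⊆ Γ) (hcard : S.card ≤ T.card)
    (hsel : ∀ i ∈ T, ∀ j ∉ T, rowNorm V j ≤ rowNorm V i)
    (hZ : IsLeastSquaresOn A T (A * X + W) Z) :
    (1 - δ) ^ 2 * frob (X - Z) ≤
      (1 + δ) * frob (restrictRows X (Γ : Set (Fin N))ᶜ) + 3 * frob W := by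
  have hTS : (T ∪ S).card ≤ s :=
    (Finset.card_le_card (Finset.union_subset_union_left hTΓ)).trans hΓS
  calc (1 - δ) ^ 2 * frob (X - Z) = (1 - δ) * ((1 - δ) * frob (X - Z)) := by ring
    _ ≤ (1 - δ) * (frob (restrictRows X (T : Set (Fin N))ᶜ) + frob W) :=
      mul_le_mul_of_nonneg_left (h.one_sub_mul_frob_sub_le hδ0 hδ1 hX hTS hZ) (sub_nonneg.2 hδ1)
    _ ≤ (1 + δ) * frob (restrictRows X (Γ : Set (Fin N))ᶜ) + 3 * frob W := by
      linarith [h.one_sub_mul_frob_restrictRows_compl_le hδ0 hδ1 hX hΓS hV hTΓ hcard hsel,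
        mul_nonneg hδ0 (frob_nonneg W)]

lemma one_sub_sq_mul_le {x : ℝ} (hδ0 : 0 ≤ δ) (hδ1 : δ ≤ 1) (hx : 0 ≤ x) : (1 - δ) ^ 2 * x ≤ x :=
  mul_le_of_le_one_left hx (pow_le_one₀ (sub_nonneg.2 hδ1) (by linarith))

lemma RIP.one_sub_sq_mul_frob_sub_le_add_frob_mul (h : RIP A s δ) (hδ0 : 0 ≤ δ) (hδ1 : δ ≤ 1)
    (hΓS : Γ.card + S.card ≤ s) (hV : IsLeastSquaresOn A Γ (A * X + W) V)
    (hTΓ : T ⊆ Γ) (hcard : S.card ≤ T.card)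
    (hsel : ∀ i ∈ T, ∀ j ∉ T, rowNorm V j ≤ rowNorm V i)
    (hZ : IsLeastSquaresOn A T (A * X + W) Z) :
    (1 - δ) ^ 2 * frob (X - Z) ≤
      (1 + δ) * frob (restrictRows X (Γ : Set (Fin N))ᶜ) + 3 * frob W +
        frob (X - restrictRows X S) + 3 * frob (A * (X - restrictRows X S)) := by
  set Y := restrictRows X S with hY
  have hB : A * X + W = A * Y + (A * (X - Y) + W) := by
    rw [← add_assoc, ← Matrix.mul_add, add_sub_cancel]
  rw [hB] at hV hZ
  have hsparse : (1 - δ) ^ 2 * frob (Y - Z) ≤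
      (1 + δ) * frob (restrictRows Y (Γ : Set (Fin N))ᶜ) + 3 * frob (A * (X - Y) + W) :=
    h.one_sub_sq_mul_frob_sub_le_of_rowSupport hδ0 hδ1 (fun _ hi => restrictRows_of_notMem hi)
      ((Finset.card_union_le Γ S).trans hΓS) hV hTΓ hcard hsel hZ
  have hYΓ : frob (restrictRows Y (Γ : Set (Fin N))ᶜ) ≤
      frob (restrictRows X (Γ : Set (Fin N))ᶜ) := by
    rw [hY, restrictRows_restrictRows, Set.inter_comm, ← restrictRows_restrictRows]
    exact frob_restrictRows_le _ _
  calc (1 - δ) ^ 2 * frob (X - Z)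
      ≤ (1 - δ) ^ 2 * (frob (X - Y) + frob (Y - Z)) := by
        rw [← sub_add_sub_cancel X Y Z]
        exact mul_le_mul_of_nonneg_left (frob_add_le _ _) (sq_nonneg _)
    _ ≤ frob (X - Y) + ((1 + δ) * frob (restrictRows X (Γ : Set (Fin N))ᶜ) +
          3 * (frob (A * (X - Y)) + frob W)) := by
        rw [mul_add]
        refine add_le_add (one_sub_sq_mul_le hδ0 hδ1 (frob_nonneg _)) (hsparse.trans ?_)
        gcongr
        exact frob_add_le _ _
    _ = _ := by ring

lemma RIP.one_sub_sq_mul_frob_sub_le (h : RIP A s δ) (hδ0 : 0 ≤ δ) (hδ1 : δ ≤ 1)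
    (hΓS : Γ.card + S.card ≤ s) (hV : IsLeastSquaresOn A Γ (A * X + W) V)
    (hTΓ : T ⊆ Γ) (hcard : S.card ≤ T.card)
    (hsel : ∀ i ∈ T, ∀ j ∉ T, rowNorm V j ≤ rowNorm V i)
    (hZ : IsLeastSquaresOn A T (A * X + W) Z) :
    (1 - δ) ^ 2 * frob (X - Z) ≤
      (1 + δ) * frob (restrictRows X (Γ : Set (Fin N))ᶜ) + 3 * frob W +
        (3 * √(1 + δ) + 1) * frob (X - restrictRows X S) +
        3 * (√(1 + δ) / √s * norm21 (X - restrictRows X S)) := by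
  rcases s.eq_zero_or_pos with rfl | hs
  -- The restricted isometry property of order `0` does not constrain `A`, but then `Z = 0`.
  · obtain rfl : Γ = ∅ := Finset.card_eq_zero.1 (by omega)
    obtain rfl : T = ∅ := Finset.subset_empty.1 hTΓ
    obtain rfl : Z = 0 := funext fun i => hZ.eq_zero_of_notMem i (Finset.notMem_empty i)
    have hX := frob_nonneg X
    have hXS := frob_nonneg (X - restrictRows X S)
    have hW := frob_nonneg W
    rw [Finset.coe_empty, Set.compl_empty, restrictRows_univ, sub_zero, Nat.cast_zero,
      Real.sqrt_zero, div_zero, zero_mul, mul_zero, add_zero]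
    calc (1 - δ) ^ 2 * frob X ≤ frob X := one_sub_sq_mul_le hδ0 hδ1 hX
      _ ≤ frob X + (δ * frob X + 3 * frob W +
            (3 * √(1 + δ) + 1) * frob (X - restrictRows X S)) :=
        le_add_of_nonneg_right (by positivity)
      _ = _ := by ring
  · refine (h.one_sub_sq_mul_frob_sub_le_add_frob_mul hδ0 hδ1 hΓS hV hTΓ hcard hsel hZ).trans ?_
    linear_combination 3 * h.frob_mul_le_add_norm21 hδ0 hs (X - restrictRows X S)

end Fusion

theorem stmt14_general {M N s : ℕ} {n : Type*} [Fintype n] {A : Matrix (Fin M) (Fin N) ℝ} {δ : ℝ}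
    (hδ0 : 0 ≤ δ) (hδ1 : δ < 1) (hRIP : RIP A s δ) {X V Xhat Xhati : Matrix (Fin N) n ℝ}
    {W : Matrix (Fin M) n ℝ} {S Γ That Ti : Finset (Fin N)} (hΓS : Γ.card + S.card ≤ s)
    (hV : IsLeastSquaresOn A Γ (A * X + W) V) (hThatΓ : That ⊆ Γ) (hcard : S.card ≤ That.card)
    (hsel : ∀ i ∈ That, ∀ j ∉ That, rowNorm V j ≤ rowNorm V i)
    (hXhat : IsLeastSquaresOn A That (A * X + W) Xhat) (hXhati : ∀ i ∉ Ti, Xhati i = 0)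
    (hXΓ : frob (restrictRows X {i | i ∉ Γ}) ≠ 0) (hXTi : frob (restrictRows X {i | i ∉ Ti}) ≠ 0)
    {η ζ ξ : ℝ}
    (hη : η = frob (restrictRows X {i | i ∉ Γ}) / frob (restrictRows X {i | i ∉ Ti}))
    (hζ : ζ = frob W / frob (restrictRows X {i | i ∉ Γ}))
    (hξ : ξ = (3 * √(1 + δ) + 1) * frob (X - restrictRows X S) /
        (3 * frob (restrictRows X {i | i ∉ Γ})) +
      (√(1 + δ) / √s) * norm21 (X - restrictRows X S) / frob (restrictRows X {i | i ∉ Γ})) :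
    frob (X - Xhat) ≤ ((1 + δ + 3 * ζ + 3 * ξ) / (1 - δ) ^ 2) * η * frob (X - Xhati) ∧
      ((1 - δ) ^ 2 / ((1 + δ + 3 * ζ + 3 * ξ) * η)) ^ 2 * frob (X - Xhat) ^ 2 ≤
        frob (X - Xhati) ^ 2 := by
  have hbound := hRIP.one_sub_sq_mul_frob_sub_le hδ0 hδ1.le hΓS hV hThatΓ hcard hsel hXhat
  have hTi : frob (restrictRows X {i | i ∉ Ti}) ≤ frob (X - Xhati) :=
    frob_restrictRows_le_frob_sub X hXhati
  change _ ≤ (1 + δ) * frob (restrictRows X {i | i ∉ Γ}) + _ + _ + _ at hbound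
  set F := frob (restrictRows X {i | i ∉ Γ})
  set G := frob (restrictRows X {i | i ∉ Ti})
  have hF : 0 < F := (frob_nonneg _).lt_of_ne' hXΓ
  have hG : 0 < G := (frob_nonneg _).lt_of_ne' hXTi
  have hη0 : 0 < η := hη ▸ div_pos hF hG
  have hC : 0 < 1 + δ + 3 * ζ + 3 * ξ := by
    have := frob_nonneg W
    have := frob_nonneg (X - restrictRows X S)
    have := norm21_nonneg (X - restrictRows X S)
    rw [hζ, hξ]
    positivity
  have hd : 0 < (1 - δ) ^ 2 := pow_pos (sub_pos.2 hδ1) 2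
  have hmain : (1 - δ) ^ 2 * frob (X - Xhat) ≤
      (1 + δ + 3 * ζ + 3 * ξ) * η * frob (X - Xhati) := calc
    _ ≤ (1 + δ + 3 * ζ + 3 * ξ) * F := hbound.trans_eq (by rw [hζ, hξ]; field_simp; ring)
    _ = (1 + δ + 3 * ζ + 3 * ξ) * η * G := by rw [mul_assoc, hη, div_mul_cancel₀ _ hG.ne']
    _ ≤ _ := mul_le_mul_of_nonneg_left hTi (mul_pos hC hη0).le
  refine ⟨?_, ?_⟩
  · rwa [div_mul_eq_mul_div, div_mul_eq_mul_div, le_div_iff₀' hd]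
  · rw [← mul_pow]
    refine pow_le_pow_left₀ (mul_nonneg (by positivity) (frob_nonneg _)) ?_ 2
    rwa [div_mul_eq_mul_div, div_le_iff₀' (mul_pos hC hη0)]

theorem stmt14 {M N L R K : ℕ} (A : Matrix (Fin M) (Fin N) ℝ) (δ : ℝ)
    (hδ0 : 0 ≤ δ) (hδ : δ < 1) (hRIP : RIP A (R + K) δ)
    (X : Matrix (Fin N) (Fin L) ℝ)
    (S : Finset (Fin N)) (hS : S.card = K)
    (hSdom : ∀ i ∈ S, ∀ j ∉ S, rowNorm X j ≤ rowNorm X i)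
    (XK : Matrix (Fin N) (Fin L) ℝ) (hXK : XK = restrictRows X (S : Set (Fin N)))
    (Γ : Finset (Fin N)) (hΓ : Γ.card ≤ R)
    (DΓ : Matrix {j // j ∈ Γ} (Fin M) ℝ) (hDΓ : IsPinv (colSub A Γ) DΓ)
    (W B : Matrix (Fin M) (Fin L) ℝ) (hB : B = A * X + W)
    (V : Matrix (Fin N) (Fin L) ℝ)
    (hV : V = fun i j => if h : i ∈ Γ then (DΓ * B) ⟨i, h⟩ j else 0)
    (That : Finset (Fin N)) (hThatΓ : That ⊆ Γ) (hThatK : That.card = K)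
    (hsel : ∀ i ∈ That, ∀ j ∉ That, rowNorm V j ≤ rowNorm V i)
    (DT : Matrix {j // j ∈ That} (Fin M) ℝ) (hDT : IsPinv (colSub A That) DT)
    (Xhat : Matrix (Fin N) (Fin L) ℝ)
    (hXhat : Xhat = fun i j => if h : i ∈ That then (DT * B) ⟨i, h⟩ j else 0)
    (Ti : Finset (Fin N)) (Xhati : Matrix (Fin N) (Fin L) ℝ)
    (hXhati : ∀ i, i ∉ Ti → Xhati i = 0)
    (hXΓ : frob (restrictRows X {i | i ∉ Γ}) ≠ 0)
    (hXTi : frob (restrictRows X {i | i ∉ Ti}) ≠ 0)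
    (ηi ζ ξ : ℝ)
    (hη : ηi = frob (restrictRows X {i | i ∉ Γ}) / frob (restrictRows X {i | i ∉ Ti}))
    (hζ : ζ = frob W / frob (restrictRows X {i | i ∉ Γ}))
    (hξ : ξ = (3 * Real.sqrt (1 + δ) + 1) * frob (X - XK) /
        (3 * frob (restrictRows X {i | i ∉ Γ})) +
      (Real.sqrt (1 + δ) / Real.sqrt (R + K)) * norm21 (X - XK) /
        frob (restrictRows X {i | i ∉ Γ})) :
    frob (X - Xhat) ≤
      ((1 + δ + 3 * ζ + 3 * ξ) / (1 - δ) ^ 2) * ηi * frob (X - Xhati) ∧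
    (ηi < (1 - δ) ^ 2 / (1 + δ + 3 * ζ + 3 * ξ) →
      ((1 - δ) ^ 2 / ((1 + δ + 3 * ζ + 3 * ξ) * ηi)) ^ 2 * (frob (X - Xhat)) ^ 2 ≤
        (frob (X - Xhati)) ^ 2) := by
  subst hXK hB
  have hΓS : Γ.card + S.card ≤ R + K := by omega
  obtain ⟨hle, hgain⟩ := stmt14_general hδ0 hδ hRIP hΓS (hV ▸ hDΓ.isLeastSquaresOn _) hThatΓ
    (hS.trans hThatK.symm).le hsel (hXhat ▸ hDT.isLeastSquaresOn _) hXhati hXΓ hXTi hη hζ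
    (by exact_mod_cast hξ)
  exact ⟨hle, fun _ => hgain⟩
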